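/- Fix integers m ≥ 1, n ≥ 3, and N' ≥ 1. Then there exists N₀ ∈ ℕ such that for every integer N ≥ N₀ and every vector p = (p_{i,j}) of positive reals summing to 1, Δ_p(N, N') < 0; that is, for sufficiently large direct sample size N, the estimator p̂ dominates the estimator p̃ under entropy loss. -/

import Mathlib

open Finset

/-- Binomial(N, q) probability mass function at `x`. -/
noncomputable def binPMF (N : ℕ) (q : ℝ) (x : ℕ) : ℝ :=
  (N.choose x : ℝ) * q ^ x * (1 - q) ^ (N - x)

/-- The entropy loss `L(d, p) = ∑ᵢ ∑ⱼ pᵢⱼ log (pᵢⱼ / dᵢⱼ)`. -/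
noncomputable def entropyLoss {m n : ℕ} (d p : Fin (m+1) → Fin (n+1) → ℝ) : ℝ :=
  ∑ i, ∑ j, p i j * Real.log (p i j / d i j)

/-- Support of the Multinomial(N, p) distribution on (1+m)(1+n) cells. -/
def suppX (m n N : ℕ) : Finset (Fin (m+1) → Fin (n+1) → Fin (N+1)) :=
  Finset.univ.filter fun x => ∑ i, ∑ j, (x i j : ℕ) = N

/-- Support of the Multinomial(N', p·) distribution on 1+m cells. -/
def suppY (m N' : ℕ) : Finset (Fin (m+1) → Fin (N'+1)) :=
  Finset.univ.filter fun y => ∑ i, (y i : ℕ) = N'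

/-- Multinomial(N, p) probability of the outcome `x`. -/
noncomputable def wX {m n N : ℕ} (p : Fin (m+1) → Fin (n+1) → ℝ)
    (x : Fin (m+1) → Fin (n+1) → Fin (N+1)) : ℝ :=
  (Nat.multinomial Finset.univ (fun k : Fin (m+1) × Fin (n+1) => (x k.1 k.2 : ℕ)) : ℝ) *
    ∏ i, ∏ j, p i j ^ (x i j : ℕ)

/-- Multinomial(N', (pᵢ.)ᵢ) probability of the outcome `y`, where `pᵢ. = ∑ⱼ pᵢⱼ`. -/
noncomputable def wY {m n N' : ℕ} (p : Fin (m+1) → Fin (n+1) → ℝ)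
    (y : Fin (m+1) → Fin (N'+1)) : ℝ :=
  (Nat.multinomial Finset.univ (fun i => (y i : ℕ)) : ℝ) *
    ∏ i, (∑ j, p i j) ^ (y i : ℕ)

/-- The estimator `p̃` based on the direct observations only. -/
noncomputable def ptilde {m n N : ℕ} (x : Fin (m+1) → Fin (n+1) → Fin (N+1)) :
    Fin (m+1) → Fin (n+1) → ℝ :=
  fun i j => ((x i j : ℝ) + 1/2) / ((N : ℝ) + (1 + m) * (1 + n) / 2)

/-- The estimator `p̂` based on the direct and aggregated observations. -/
noncomputable def phat {m n N N' : ℕ} (x : Fin (m+1) → Fin (n+1) → Fin (N+1))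
    (y : Fin (m+1) → Fin (N'+1)) : Fin (m+1) → Fin (n+1) → ℝ :=
  fun i j =>
    ((((∑ j', (x i j' : ℕ)) : ℕ) : ℝ) + (y i : ℝ) + (1 + n) / 2) /
        ((N : ℝ) + (N' : ℝ) + (1 + m) * (1 + n) / 2) *
      (((x i j : ℝ) + 1/2) / ((((∑ j', (x i j' : ℕ)) : ℕ) : ℝ) + (1 + n) / 2))

/-- The risk difference `Δ_p(N, N') = E_p[L(p̂, p)] − E_p[L(p̃, p)]`, the expectation being
a finite sum over the supports of the independent multinomial observations. -/
noncomputable def riskDiff (m n : ℕ) (p : Fin (m+1) → Fin (n+1) → ℝ) (N N' : ℕ) : ℝ :=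
  ∑ x ∈ suppX m n N, ∑ y ∈ suppY m N',
    wX p x * wY p y * (entropyLoss (phat x y) p - entropyLoss (ptilde x) p)

/-!
Let `q` be the vector of row marginals of `p` and `a = (1 + n) / 2`. The within-row factors of `p̂`
and `p̃` coincide, so `Δ_p(N, N') = R(N + N') - R(N)`, where `R(N)` is the entropy risk of the
estimator of `q` that adds the pseudocount `a` to each cell of a sample of size `N`. It remains to
see that `R(N + 1) < R(N)` for large `N`, uniformly in `q`.

With `M` rows, `R(N) - R(N + 1)` is
`∑ i, qᵢ² E[log (Zᵢ + a + 1) - log (Zᵢ + a)] - (log (N + M a + 1) - log (N + M a))` with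
`Zᵢ ~ Binomial(N, qᵢ)`. The increment of `log` is at least `1 / (Zᵢ + a + 1 / 2)`, and two
applications of the size-bias identity `E[Z g(Z)] = N q E[g(Z' + 1)]`, `Z' ~ Binomial(N - 1, q)`,
bound the sum below by `(1 - M (a - 1 / 2) / (N + 2)) / (N + 1)`, whatever `q` is. The subtracted
term is `1 / N - (M a + 1 / 2) / N² + O(1 / N³)`, which is smaller at order `1 / N²` as `M > 1`.
-/

open Filter Polynomial

/-- The linear functional on `ℝ[X]` sending `X ^ z` to `g z`: the expectation of `g` under the law
whose probability generating function is the given polynomial. -/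
noncomputable def pgfExp (g : ℕ → ℝ) : ℝ[X] →ₗ[ℝ] ℝ :=
  Polynomial.lsum fun z => g z • LinearMap.id

lemma pgfExp_monomial (g : ℕ → ℝ) (z : ℕ) (r : ℝ) : pgfExp g (monomial z r) = r * g z := by
  simp [pgfExp, Polynomial.lsum_apply, Polynomial.sum_monomial_index, mul_comm]

lemma pgfExp_mul (g : ℕ → ℝ) (P Q : ℝ[X]) :
    pgfExp g (P * Q) = pgfExp (fun s => pgfExp (fun t => g (s + t)) Q) P := by
  induction P using Polynomial.induction_on' with
  | add P₁ P₂ h₁ h₂ => rw [add_mul, map_add, map_add, h₁, h₂]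
  | monomial s r =>
    induction Q using Polynomial.induction_on' with
    | add Q₁ Q₂ h₁ h₂ =>
      rw [mul_add, map_add, h₁, h₂]
      simp only [pgfExp_monomial, map_add, mul_add]
    | monomial t u => simp only [monomial_mul_monomial, pgfExp_monomial, mul_assoc]

/-- The expectation of `g` under the Binomial(N, q) distribution. -/
noncomputable def binExp (N : ℕ) (q : ℝ) (g : ℕ → ℝ) : ℝ :=
  ∑ z ∈ range (N + 1), binPMF N q z * g z

section BinExp

variable (N N' : ℕ) (q : ℝ)

lemma binExp_eq_pgfExp (g : ℕ → ℝ) :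
    binExp N q g = pgfExp g ((C q * X + C (1 - q)) ^ N) := by
  have binomial_pgf : (C q * X + C (1 - q)) ^ N =
      ∑ z ∈ range (N + 1), monomial z (binPMF N q z) := by
    rw [add_pow]
    refine sum_congr rfl fun z _ => ?_
    rw [← C_mul_X_pow_eq_monomial, binPMF]
    simp only [mul_pow, map_mul, map_pow, map_natCast]
    ring
  simp only [binExp, binomial_pgf, map_sum, pgfExp_monomial]

lemma binExp_const (r : ℝ) : binExp N q (fun _ => r) = r := by
  have total : ∑ z ∈ range (N + 1), binPMF N q z = 1 := by
    have h := add_pow q (1 - q) N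
    rw [add_sub_cancel, one_pow] at h
    rw [h]
    exact sum_congr rfl fun z _ => by rw [binPMF]; ring
  rw [binExp, ← sum_mul, total, one_mul]

lemma binExp_sub (f g : ℕ → ℝ) :
    binExp N q (fun z => f z - g z) = binExp N q f - binExp N q g := by
  simp only [binExp, mul_sub, sum_sub_distrib]

lemma binExp_const_mul (r : ℝ) (g : ℕ → ℝ) :
    binExp N q (fun z => r * g z) = r * binExp N q g := by
  simp only [binExp, mul_sum, mul_left_comm]

lemma binExp_binExp_add (g : ℕ → ℝ) :
    binExp N q (fun s => binExp N' q fun t => g (s + t)) = binExp (N + N') q g := by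
  simp only [binExp_eq_pgfExp, pow_add, pgfExp_mul]

lemma binExp_one (g : ℕ → ℝ) : binExp 1 q g = g 0 + q * (g 1 - g 0) := by
  norm_num [binExp, binPMF, sum_range_succ]
  ring

lemma binExp_succ_sub (g : ℕ → ℝ) :
    binExp (N + 1) q g - binExp N q g = q * binExp N q fun z => g (z + 1) - g z := by
  rw [← binExp_binExp_add N 1, ← binExp_sub, ← binExp_const_mul]
  simp [binExp_one]

lemma binExp_succ_mul_self (g : ℕ → ℝ) :
    binExp (N + 1) q (fun z => z * g z) = (N + 1) * (q * binExp N q fun z => g (z + 1)) := by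
  have absorption (z : ℕ) : binPMF (N + 1) q (z + 1) * (z + 1) = (N + 1) * q * binPMF N q z := by
    have h : ((N : ℝ) + 1) * N.choose z = (N + 1).choose (z + 1) * (z + 1) :=
      mod_cast Nat.add_one_mul_choose_eq N z
    rw [binPMF, binPMF, Nat.add_sub_add_right]
    linear_combination (-q ^ (z + 1) * (1 - q) ^ (N - z)) * h
  rw [binExp, sum_range_succ', binExp, mul_sum, mul_sum]
  simp only [Nat.cast_zero, zero_mul, mul_zero, add_zero, Nat.cast_add_one]
  exact sum_congr rfl fun z _ => by rw [← mul_assoc, absorption]; ring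

lemma mul_binExp_inv_add_one (a : ℝ) :
    (N + 1) * (q * binExp N q fun z => (z + (a + 1))⁻¹) =
      binExp (N + 1) q fun z => z * (z + a)⁻¹ := by
  rw [binExp_succ_mul_self]
  congr! 5 with z
  push_cast
  ring

variable {q}

lemma binExp_mono (hq : q ∈ Set.Icc 0 1) {f g : ℕ → ℝ} (hfg : ∀ z, f z ≤ g z) :
    binExp N q f ≤ binExp N q g := by
  have nonneg (z : ℕ) : 0 ≤ binPMF N q z :=
    mul_nonneg (mul_nonneg (Nat.cast_nonneg _) (pow_nonneg hq.1 _))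
      (pow_nonneg (sub_nonneg.mpr hq.2) _)
  exact sum_le_sum fun z _ => mul_le_mul_of_nonneg_left (hfg z) (nonneg z)

lemma mul_binExp_inv_le (hq : q ∈ Set.Icc 0 1) {a : ℝ} (ha : 1 ≤ a) :
    (N + 1) * (q * binExp N q fun z => (z + a)⁻¹) ≤ 1 := by
  calc (N + 1) * (q * binExp N q fun z => (z + a)⁻¹)
      = binExp (N + 1) q fun z => z * (z + (a - 1))⁻¹ := by
        rw [← mul_binExp_inv_add_one, sub_add_cancel]
    _ ≤ binExp (N + 1) q fun _ => 1 := by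
        refine binExp_mono _ hq fun z => ?_
        rw [← div_eq_mul_inv]
        exact div_le_one_of_le₀ (by linarith) (by linarith [z.cast_nonneg (α := ℝ)])
    _ = 1 := binExp_const _ _ _

lemma le_mul_sq_mul_binExp_inv (hq : q ∈ Set.Icc 0 1) {a : ℝ} (ha : 1 ≤ a) :
    q - a / (N + 2) ≤ (N + 1) * (q * (q * binExp N q fun z => (z + (a + 1))⁻¹)) := by
  have complement : binExp (N + 1) q (fun z => z * (z + a)⁻¹) =
      1 - a * binExp (N + 1) q fun z => (z + a)⁻¹ := by
    have pointwise (z : ℕ) : z * (z + a)⁻¹ = 1 - a * (z + a)⁻¹ := by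
      have : (z : ℝ) + a ≠ 0 := by positivity
      field_simp
      ring
    simp only [pointwise, binExp_sub, binExp_const, binExp_const_mul]
  have tail : q * binExp (N + 1) q (fun z => (z + a)⁻¹) ≤ 1 / (N + 2) := by
    have h := mul_binExp_inv_le (N + 1) hq ha
    rw [Nat.cast_add_one, add_assoc, one_add_one_eq_two] at h
    rwa [le_div_iff₀' (by positivity)]
  calc q - a / (N + 2) = q - a * (1 / (N + 2)) := by ring
    _ ≤ q - a * (q * binExp (N + 1) q fun z => (z + a)⁻¹) := by gcongr
    _ = q * binExp (N + 1) q (fun z => z * (z + a)⁻¹) := by rw [complement]; ring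
    _ = (N + 1) * (q * (q * binExp N q fun z => (z + (a + 1))⁻¹)) := by
        rw [← mul_binExp_inv_add_one]; ring

end BinExp

section Multinomial

variable {κ : Type*} [Fintype κ]

/-- The probability of the cell counts `k` under the multinomial distribution with `∑ c, k c`
trials and cell probabilities `q`. -/
noncomputable def multinomialPMF (q : κ → ℝ) (k : κ → ℕ) : ℝ :=
  Nat.multinomial univ k * ∏ c, q c ^ k c

variable [DecidableEq κ]

lemma multinomial_pgf {q : κ → ℝ} (hq : ∑ c, q c = 1) (S : Finset κ) (N : ℕ) :
    (C (∑ c ∈ S, q c) * X + C (1 - ∑ c ∈ S, q c)) ^ N =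
      ∑ k ∈ piAntidiag univ N, monomial (∑ c ∈ S, k c) (multinomialPMF q k) := by
  have split : C (∑ c ∈ S, q c) * X + C (1 - ∑ c ∈ S, q c) =
      ∑ c, C (q c) * if c ∈ S then X else 1 := by
    rw [← hq, ← sum_add_sum_compl S, ← sum_add_sum_compl S fun c => C (q c) * _,
      add_sub_cancel_left, map_sum, map_sum, sum_mul]
    congr 1
    · exact sum_congr rfl fun c hc => by rw [if_pos hc]
    · exact sum_congr rfl fun c hc => by rw [if_neg (mem_compl.mp hc), mul_one]
  rw [split, sum_pow_eq_sum_piAntidiag]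
  refine sum_congr rfl fun k _ => ?_
  rw [← C_mul_X_pow_eq_monomial, multinomialPMF, map_mul, map_natCast, map_prod, mul_assoc]
  simp only [mul_pow, prod_mul_distrib, ite_pow, one_pow, prod_ite_mem, univ_inter, map_pow,
    prod_pow_eq_pow_sum]

lemma sum_multinomialPMF_mul {q : κ → ℝ} (hq : ∑ c, q c = 1) (S : Finset κ) (N : ℕ)
    (g : ℕ → ℝ) :
    ∑ k ∈ piAntidiag univ N, multinomialPMF q k * g (∑ c ∈ S, k c) =
      binExp N (∑ c ∈ S, q c) g := by
  rw [binExp_eq_pgfExp, multinomial_pgf hq, map_sum]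
  simp only [pgfExp_monomial]

lemma sum_fin_filter_eq_sum_piAntidiag (N : ℕ) (F : (κ → ℕ) → ℝ) :
    ∑ x : κ → Fin (N + 1) with ∑ c, (x c : ℕ) = N, F (fun c => x c) =
      ∑ k ∈ piAntidiag univ N, F k := by
  refine sum_bij (fun x _ c => (x c : ℕ)) ?_ ?_ ?_ fun _ _ => rfl
  · intro x hx
    simpa using hx
  · intro x _ y _ hxy
    exact funext fun c => Fin.ext (congrFun hxy c)
  · intro k hk
    have total : ∑ c, k c = N := (mem_piAntidiag.mp hk).1
    have bound (c : κ) : k c < N + 1 :=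
      Nat.lt_succ_of_le (total ▸ single_le_sum (fun _ _ => Nat.zero_le _) (mem_univ c))
    exact ⟨fun c => ⟨k c, bound c⟩, by simpa using total, rfl⟩

end Multinomial

section Log

lemma inv_add_half_le_log_sub_log {x : ℝ} (hx : 0 < x) :
    (x + 1 / 2)⁻¹ ≤ Real.log (x + 1) - Real.log x := by
  calc (x + 1 / 2)⁻¹ = 2 * x⁻¹ / (x⁻¹ + 2) := by field_simp; ring
    _ ≤ Real.log (1 + x⁻¹) := Real.le_log_one_add_of_nonneg (by positivity)
    _ = Real.log ((x + 1) / x) := by congr 1; field_simp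
    _ = Real.log (x + 1) - Real.log x := Real.log_div (by positivity) hx.ne'

lemma log_sub_log_le {x : ℝ} (hx : 0 < x) :
    Real.log (x + 1) - Real.log x ≤ (x + 1 / 2) / (x * (x + 1)) := by
  have one_le : 1 ≤ (x + 1) / x := by rw [one_le_div hx]; linarith
  calc Real.log (x + 1) - Real.log x = Real.log ((x + 1) / x) :=
        (Real.log_div (by positivity) hx.ne').symm
    _ ≤ Real.sinh (Real.log ((x + 1) / x)) := Real.self_le_sinh_iff.mpr (Real.log_nonneg one_le)
    _ = (x + 1 / 2) / (x * (x + 1)) := by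
        rw [Real.sinh_log (by positivity)]
        field_simp
        ring

lemma eventually_quadratic_pos {a : ℝ} (ha : 0 < a) (b c : ℝ) :
    ∀ᶠ x : ℝ in atTop, 0 < a * x ^ 2 + b * x + c := by
  have linear : Tendsto (fun x : ℝ => a * x + b) atTop atTop :=
    tendsto_atTop_add_const_right _ b (tendsto_id.const_mul_atTop ha)
  have quadratic := tendsto_atTop_add_const_right _ c (linear.atTop_mul_atTop₀ tendsto_id)
  filter_upwards [quadratic.eventually_gt_atTop 0] with x hx
  simp only [id_eq] at hx
  linarith

-- The left-hand side is `1 - (c - 1 / 2) / x + O(1 / x ^ 2)`.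
lemma eventually_mul_log_sub_log_lt {c d : ℝ} (hd : d < c - 1 / 2) :
    ∀ᶠ x : ℝ in atTop,
      (x + 1) * (Real.log (x + c + 1) - Real.log (x + c)) < 1 - d / (x + 2) := by
  have lead : 0 < c - 1 / 2 - d := sub_pos.mpr hd
  filter_upwards [eventually_gt_atTop 0, eventually_gt_atTop (-c), eventually_quadratic_pos lead
    ((2 - d) * (2 * c + 1) + c * (c + 1) - 2 - 3 * (c + 1 / 2))
    ((2 - d) * (c * (c + 1)) - 2 * (c + 1 / 2))] with x hx hxc hquad
  have hxc' : 0 < x + c := by linarith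
  calc (x + 1) * (Real.log (x + c + 1) - Real.log (x + c))
      ≤ (x + 1) * ((x + c + 1 / 2) / ((x + c) * (x + c + 1))) := by
        gcongr
        exact log_sub_log_le hxc'
    _ < (x + 2 - d) / (x + 2) := by
        rw [mul_div_assoc', div_lt_div_iff₀ (by positivity) (by positivity)]
        linarith
    _ = 1 - d / (x + 2) := by field_simp

end Log

section SmoothedCrossEntropy

/-- The logarithmic loss `-log ((z + a) / (N + c))` of the smoothed frequency of a cell observed
`z` times in `N` trials, `a` being the pseudocount of the cell and `c` that of all cells. -/
noncomputable def smoothedLogLoss (c a : ℝ) (N z : ℕ) : ℝ :=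
  Real.log ((N + c) / (z + a))

lemma smoothedLogLoss_eq {c a : ℝ} (hc : 0 < c) (ha : 0 < a) (N z : ℕ) :
    smoothedLogLoss c a N z = Real.log (N + c) - Real.log (z + a) :=
  Real.log_div (by positivity) (by positivity)

variable {ι : Type*} [Fintype ι]

/-- The expected cross entropy, relative to `q`, of the estimator of `q` that adds the pseudocount
`a` to each cell of a Multinomial(N, q) sample. It differs from the entropy risk of that estimator
by the entropy of `q`, which does not depend on `N`. -/
noncomputable def smoothedCrossEntropy (a : ℝ) (q : ι → ℝ) (N : ℕ) : ℝ :=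
  ∑ i, q i * binExp N (q i) (smoothedLogLoss (Fintype.card ι * a) a N)

variable {a : ℝ} {q : ι → ℝ}

lemma smoothedCrossEntropy_eq [Nonempty ι] (ha : 0 < a) (hq : ∑ i, q i = 1) (N : ℕ) :
    smoothedCrossEntropy a q N = Real.log (N + Fintype.card ι * a) -
      ∑ i, q i * binExp N (q i) fun z => Real.log (z + a) := by
  have hc : 0 < Fintype.card ι * a := by positivity
  have row (i : ι) : binExp N (q i) (smoothedLogLoss (Fintype.card ι * a) a N) =
      Real.log (N + Fintype.card ι * a) - binExp N (q i) fun z => Real.log (z + a) := by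
    simp only [funext (smoothedLogLoss_eq hc ha N), binExp_sub, binExp_const]
  simp only [smoothedCrossEntropy, row, mul_sub, sum_sub_distrib, ← sum_mul, hq, one_mul]

lemma le_mul_binExp_log_succ_sub (N : ℕ) {r : ℝ} (hr : r ∈ Set.Icc 0 1) (ha : 3 / 2 ≤ a) :
    r - (a - 1 / 2) / (N + 2) ≤ (N + 1) * (r * (binExp (N + 1) r (fun z => Real.log (z + a)) -
      binExp N r fun z => Real.log (z + a))) := by
  have increment (z : ℕ) : ((z : ℝ) + (a - 1 / 2 + 1))⁻¹ ≤
      Real.log ((z + 1 : ℕ) + a) - Real.log (z + a) := by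
    rw [Nat.cast_add_one, add_right_comm, show (z : ℝ) + (a - 1 / 2 + 1) = z + a + 1 / 2 by ring]
    exact inv_add_half_le_log_sub_log (by positivity)
  have r_nonneg : 0 ≤ r := hr.1
  calc r - (a - 1 / 2) / (N + 2)
      ≤ (N + 1) * (r * (r * binExp N r fun z => (z + (a - 1 / 2 + 1))⁻¹)) :=
        le_mul_sq_mul_binExp_inv N hr (by linarith)
    _ ≤ (N + 1) * (r * (r * binExp N r fun z =>
          Real.log ((z + 1 : ℕ) + a) - Real.log (z + a))) := by
        gcongr
        exact binExp_mono N hr increment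
    _ = _ := by rw [binExp_succ_sub]

lemma le_mul_sum_binExp_log_succ_sub (ha : 3 / 2 ≤ a) (hq : q ∈ stdSimplex ℝ ι) (N : ℕ) :
    1 - Fintype.card ι * (a - 1 / 2) / (N + 2) ≤
      (N + 1) * ∑ i, q i * (binExp (N + 1) (q i) (fun z => Real.log (z + a)) -
        binExp N (q i) fun z => Real.log (z + a)) := by
  calc 1 - Fintype.card ι * (a - 1 / 2) / (N + 2)
      = ∑ i, (q i - (a - 1 / 2) / (N + 2)) := by
        rw [sum_sub_distrib, hq.2, sum_const, card_univ, nsmul_eq_mul, mul_div_assoc]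
    _ ≤ _ := by
        rw [mul_sum]
        exact sum_le_sum fun i _ =>
          le_mul_binExp_log_succ_sub N (mem_Icc_of_mem_stdSimplex hq i) ha

theorem eventually_smoothedCrossEntropy_succ_lt (hι : 1 < Fintype.card ι) (ha : 3 / 2 ≤ a) :
    ∀ᶠ N : ℕ in atTop, ∀ q ∈ stdSimplex ℝ ι,
      smoothedCrossEntropy a q (N + 1) < smoothedCrossEntropy a q N := by
  have : Nonempty ι := Fintype.card_pos_iff.mp (by omega)
  have hι' : (1 : ℝ) < Fintype.card ι := mod_cast hι
  have rate : Fintype.card ι * (a - 1 / 2) < Fintype.card ι * a - 1 / 2 := by linarith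
  filter_upwards [tendsto_natCast_atTop_atTop.eventually (eventually_mul_log_sub_log_lt rate)]
    with N hN q hq
  have gain := lt_of_mul_lt_mul_left
    (hN.trans_le (le_mul_sum_binExp_log_succ_sub ha hq N)) (by positivity)
  rw [smoothedCrossEntropy_eq (by positivity) hq.2, smoothedCrossEntropy_eq (by positivity) hq.2]
  simp only [mul_sub, sum_sub_distrib] at gain
  rw [Nat.cast_add_one, add_right_comm]
  linarith

end SmoothedCrossEntropy

section RiskDifference

variable {m n : ℕ} (N N' : ℕ) {p : Fin (m + 1) → Fin (n + 1) → ℝ}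

lemma sum_suppX_mul (hp : ∑ i, ∑ j, p i j = 1) (i : Fin (m + 1)) (g : ℕ → ℝ) :
    ∑ x ∈ suppX m n N, wX p x * g (∑ j, (x i j : ℕ)) = binExp N (∑ j, p i j) g := by
  let row : Finset (Fin (m + 1) × Fin (n + 1)) := {i} ×ˢ univ
  have row_sum {R : Type} [AddCommMonoid R] (f : Fin (m + 1) × Fin (n + 1) → R) :
      ∑ c ∈ row, f c = ∑ j, f (i, j) := by
    simp only [row, sum_product, sum_singleton]
  have marginal := sum_multinomialPMF_mul (q := fun c : Fin (m + 1) × Fin (n + 1) => p c.1 c.2)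
    (by rwa [Fintype.sum_prod_type]) row N g
  rw [← sum_fin_filter_eq_sum_piAntidiag N fun k => _ * g (∑ c ∈ row, k c), row_sum] at marginal
  rw [← marginal]
  refine sum_equiv (Equiv.curry _ _ _).symm (fun x => ?_) fun x _ => ?_
  · simp [suppX, Fintype.sum_prod_type]
  · simp only [wX, multinomialPMF, row_sum, Fintype.prod_prod_type]
    rfl

lemma sum_suppY_mul (hp : ∑ i, ∑ j, p i j = 1) (i : Fin (m + 1)) (g : ℕ → ℝ) :
    ∑ y ∈ suppY m N', wY p y * g (y i) = binExp N' (∑ j, p i j) g := by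
  have marginal := sum_multinomialPMF_mul hp {i} N' g
  rw [← sum_fin_filter_eq_sum_piAntidiag N' fun k => _ * g (∑ c ∈ {i}, k c)] at marginal
  simp only [sum_singleton] at marginal
  exact marginal

lemma sum_suppX_sum_suppY_mul (hp : ∑ i, ∑ j, p i j = 1) (i : Fin (m + 1)) (F : ℕ → ℕ → ℝ) :
    ∑ x ∈ suppX m n N, ∑ y ∈ suppY m N', wX p x * wY p y * F (∑ j, (x i j : ℕ)) (y i) =
      binExp N (∑ j, p i j) fun s => binExp N' (∑ j, p i j) (F s) := by
  simp only [mul_assoc, ← mul_sum, sum_suppY_mul N' hp]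
  exact sum_suppX_mul N hp i fun s => binExp N' (∑ j, p i j) (F s)

variable {N N'}

lemma ptilde_div_phat (x : Fin (m + 1) → Fin (n + 1) → Fin (N + 1))
    (y : Fin (m + 1) → Fin (N' + 1)) (i : Fin (m + 1)) (j : Fin (n + 1)) :
    ptilde x i j / phat x y i j =
      ((N + N' + (1 + m) * (1 + n) / 2) / ((∑ j, (x i j : ℕ) : ℕ) + y i + (1 + n) / 2)) /
        ((N + (1 + m) * (1 + n) / 2) / ((∑ j, (x i j : ℕ) : ℕ) + (1 + n) / 2)) := by
  unfold ptilde phat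
  field_simp

lemma ptilde_pos (x : Fin (m + 1) → Fin (n + 1) → Fin (N + 1)) (i : Fin (m + 1))
    (j : Fin (n + 1)) : 0 < ptilde x i j := by
  unfold ptilde
  positivity

lemma phat_pos (x : Fin (m + 1) → Fin (n + 1) → Fin (N + 1))
    (y : Fin (m + 1) → Fin (N' + 1)) (i : Fin (m + 1)) (j : Fin (n + 1)) : 0 < phat x y i j := by
  unfold phat
  positivity

lemma entropyLoss_sub_entropyLoss {d e : Fin (m + 1) → Fin (n + 1) → ℝ} (hp : ∀ i j, 0 < p i j)
    (hd : ∀ i j, 0 < d i j) (he : ∀ i j, 0 < e i j) :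
    entropyLoss d p - entropyLoss e p = ∑ i, ∑ j, p i j * Real.log (e i j / d i j) := by
  simp only [entropyLoss, ← sum_sub_distrib, ← mul_sub]
  refine sum_congr rfl fun i _ => sum_congr rfl fun j _ => ?_
  rw [Real.log_div (hp i j).ne' (hd i j).ne', Real.log_div (hp i j).ne' (he i j).ne',
    Real.log_div (he i j).ne' (hd i j).ne', sub_sub_sub_cancel_left]

lemma entropyLoss_phat_sub_entropyLoss_ptilde (hp : ∀ i j, 0 < p i j)
    (x : Fin (m + 1) → Fin (n + 1) → Fin (N + 1)) (y : Fin (m + 1) → Fin (N' + 1)) :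
    entropyLoss (phat x y) p - entropyLoss (ptilde x) p =
      ∑ i, (∑ j, p i j) *
        (smoothedLogLoss ((1 + m) * (1 + n) / 2) ((1 + n) / 2) (N + N')
            (∑ j, (x i j : ℕ) + y i) -
          smoothedLogLoss ((1 + m) * (1 + n) / 2) ((1 + n) / 2) N (∑ j, (x i j : ℕ))) := by
  rw [entropyLoss_sub_entropyLoss hp (phat_pos x y) (ptilde_pos x)]
  refine sum_congr rfl fun i _ => ?_
  rw [sum_mul]
  refine sum_congr rfl fun j _ => ?_
  rw [ptilde_div_phat, Real.log_div (by positivity) (by positivity)]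
  simp only [smoothedLogLoss, Nat.cast_add]

theorem riskDiff_eq_smoothedCrossEntropy_sub (hp : ∀ i j, 0 < p i j)
    (hs : ∑ i, ∑ j, p i j = 1) :
    riskDiff m n p N N' =
      smoothedCrossEntropy ((1 + n) / 2) (fun i => ∑ j, p i j) (N + N') -
        smoothedCrossEntropy ((1 + n) / 2) (fun i => ∑ j, p i j) N := by
  have card : (Fintype.card (Fin (m + 1)) : ℝ) * ((1 + n) / 2) = (1 + m) * (1 + n) / 2 := by
    rw [Fintype.card_fin, Nat.cast_add_one]
    ring
  simp only [riskDiff, entropyLoss_phat_sub_entropyLoss_ptilde hp, mul_sum,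
    smoothedCrossEntropy, card, ← sum_sub_distrib, ← mul_sub]
  rw [sum_congr rfl fun x _ => sum_comm, sum_comm]
  refine sum_congr rfl fun i _ => ?_
  simp only [mul_left_comm _ (∑ j, p i j), ← mul_sum]
  congr 1
  rw [sum_suppX_sum_suppY_mul N N' hs i fun s t => smoothedLogLoss _ _ (N + N') (s + t) -
    smoothedLogLoss _ _ N s]
  simp only [binExp_sub, binExp_const, binExp_binExp_add]

end RiskDifference

theorem dominance_large_direct_sample_general (m n : ℕ) (hm : 1 ≤ m) (hn : 2 ≤ n) :
    ∃ N₀ : ℕ, ∀ N N' : ℕ, N₀ ≤ N → 1 ≤ N' →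
      ∀ p : Fin (m + 1) → Fin (n + 1) → ℝ, (∀ i j, 0 < p i j) →
        ∑ i, ∑ j, p i j = 1 → riskDiff m n p N N' < 0 := by
  have pseudocount : (3 : ℝ) / 2 ≤ (1 + n) / 2 := by
    have : (2 : ℝ) ≤ n := mod_cast hn
    linarith
  have two_rows : 1 < Fintype.card (Fin (m + 1)) := by rw [Fintype.card_fin]; omega
  obtain ⟨N₀, decreasing⟩ := eventually_atTop.mp
    (eventually_smoothedCrossEntropy_succ_lt two_rows pseudocount)
  refine ⟨N₀, fun N N' hN hN' p hp hs => ?_⟩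
  have rows_mem : (fun i => ∑ j, p i j) ∈ stdSimplex ℝ (Fin (m + 1)) :=
    ⟨fun i => sum_nonneg fun j _ => (hp i j).le, hs⟩
  rw [riskDiff_eq_smoothedCrossEntropy_sub hp hs, sub_neg]
  exact Nat.rel_of_forall_rel_succ_of_le_of_lt (· > ·)
    (fun K hK => decreasing K hK _ rows_mem) hN (by omega)

theorem dominance_large_direct_sample (m n N' : ℕ)
    (hm : 1 ≤ m) (hn : 3 ≤ n) (hN' : 1 ≤ N') :
    ∃ N₀ : ℕ, ∀ N : ℕ, N₀ ≤ N →
      ∀ p : Fin (m+1) → Fin (n+1) → ℝ, (∀ i j, 0 < p i j) →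
        ∑ i, ∑ j, p i j = 1 → riskDiff m n p N N' < 0 :=
  (dominance_large_direct_sample_general m n hm (by omega)).imp fun _ dominates N hN =>
    dominates N N' hN hN'
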